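/- Let (X, 𝒜, μ) be a measure space with μ σ-finite, and let p, q : X → ℝ be measurable functions with p ≥ 0, q ≥ 0, ∫ p dμ = 1 and ∫ q dμ = 1. Suppose D : X → ℝ is measurable with 0 < D(x) < 1 for all x, the integral ∫ (p·log D + q·log(1−D)) dμ is finite, and it equals the optimal value ∫_{ {p+q>0} } (p·log(p/(p+q)) + q·log(q/(p+q))) dμ (assumed finite). Then D(x) = p(x)/(p(x)+q(x)) for μ-almost every x in the set {x : p(x)+q(x) > 0}. -/

import Mathlib

open MeasureTheory Real Set

/-!
The optimal integrand `p log (p / (p + q)) + q log (q / (p + q))` exceeds the discriminator's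
integrand `p log D + q log (1 - D)` by a defect that is a sum of two nonnegative multiples of values
of `klFun t = t log t + 1 - t`. This function is nonnegative and vanishes only at `t = 1`, so
on `{p + q > 0}` the defect is nonnegative and vanishes exactly where `D = p / (p + q)`; if the two
integrals agree, the defect vanishes almost everywhere.
-/

section Pointwise

open InformationTheory

variable {a b d s : ℝ}

lemma mul_log_add_mul_klFun_div (hs : s ≠ 0) (hd : d ≠ 0) :
    a * log d + s * d * klFun (a / (s * d)) = a * log (a / s) + (s * d - a) := by
  rcases eq_or_ne a 0 with rfl | ha
  · simp [klFun_zero]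
  · have log_ratio : log (a / (s * d)) = log (a / s) - log d := by
      rw [← div_div, log_div (div_ne_zero ha hs) hd]
    rw [klFun_apply, log_ratio]
    field_simp
    ring

lemma mul_log_add_mul_log_one_sub_add_mul_klFun (hd₀ : d ≠ 0) (hd₁ : 1 - d ≠ 0)
    (hab : a + b ≠ 0) :
    a * log d + b * log (1 - d) +
        ((a + b) * d * klFun (a / ((a + b) * d)) +
          (a + b) * (1 - d) * klFun (b / ((a + b) * (1 - d)))) =
      a * log (a / (a + b)) + b * log (b / (a + b)) := by
  linear_combination mul_log_add_mul_klFun_div (a := a) hab hd₀ +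
    mul_log_add_mul_klFun_div (a := b) hab hd₁

lemma mul_klFun_div_nonneg (ha : 0 ≤ a) (hs : 0 ≤ s) : 0 ≤ s * klFun (a / s) :=
  mul_nonneg hs (klFun_nonneg (div_nonneg ha hs))

lemma mul_klFun_div_eq_zero_iff (ha : 0 ≤ a) (hs : 0 < s) : s * klFun (a / s) = 0 ↔ a = s := by
  rw [mul_eq_zero_iff_left hs.ne', klFun_eq_zero_iff (div_nonneg ha hs.le),
    div_eq_one_iff_eq hs.ne']

lemma mul_log_add_mul_log_one_sub_le (ha : 0 ≤ a) (hb : 0 ≤ b) (hd : d ∈ Ioo 0 1)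
    (hab : 0 < a + b) :
    a * log d + b * log (1 - d) ≤ a * log (a / (a + b)) + b * log (b / (a + b)) := by
  have hd' : 0 < 1 - d := sub_pos.mpr hd.2
  rw [← mul_log_add_mul_log_one_sub_add_mul_klFun hd.1.ne' hd'.ne' hab.ne']
  exact le_add_of_nonneg_right (add_nonneg (mul_klFun_div_nonneg ha (mul_pos hab hd.1).le)
    (mul_klFun_div_nonneg hb (mul_pos hab hd').le))

lemma mul_log_add_mul_log_one_sub_eq_iff (ha : 0 ≤ a) (hb : 0 ≤ b) (hd : d ∈ Ioo 0 1)
    (hab : 0 < a + b) :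
    a * log d + b * log (1 - d) = a * log (a / (a + b)) + b * log (b / (a + b)) ↔
      d = a / (a + b) := by
  have hd' : 0 < 1 - d := sub_pos.mpr hd.2
  have hsd : 0 < (a + b) * d := mul_pos hab hd.1
  have hsd' : 0 < (a + b) * (1 - d) := mul_pos hab hd'
  rw [← mul_log_add_mul_log_one_sub_add_mul_klFun hd.1.ne' hd'.ne' hab.ne', left_eq_add,
    add_eq_zero_iff_of_nonneg (mul_klFun_div_nonneg ha hsd.le) (mul_klFun_div_nonneg hb hsd'.le),
    mul_klFun_div_eq_zero_iff ha hsd, mul_klFun_div_eq_zero_iff hb hsd', eq_div_iff hab.ne']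
  constructor
  · rintro ⟨had, -⟩
    linarith
  · intro hda
    constructor <;> linarith

end Pointwise

section Integral

variable {X : Type*} [MeasurableSpace X] {μ : Measure X} {p q D : X → ℝ}

lemma setIntegral_add_pos_eq_integral (hp : 0 ≤ᵐ[μ] p) (hq : 0 ≤ᵐ[μ] q) (u v : X → ℝ) :
    ∫ x in {x | 0 < p x + q x}, (p x * u x + q x * v x) ∂μ = ∫ x, (p x * u x + q x * v x) ∂μ := by
  apply setIntegral_eq_integral_of_ae_compl_eq_zero
  filter_upwards [hp, hq] with x hpx hqx hx
  obtain ⟨hp_zero, hq_zero⟩ : p x = 0 ∧ q x = 0 :=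
    (add_eq_zero_iff_of_nonneg hpx hqx).mp ((not_lt.mp hx).antisymm (add_nonneg hpx hqx))
  simp [hp_zero, hq_zero]

theorem gan_optimal_discriminator_unique_general
    (hpm : AEMeasurable p μ) (hqm : AEMeasurable q μ) (hp : 0 ≤ᵐ[μ] p) (hq : 0 ≤ᵐ[μ] q)
    (hD : ∀ᵐ x ∂μ.restrict {x | 0 < p x + q x}, D x ∈ Ioo 0 1)
    (hint : Integrable (fun x => p x * log (D x) + q x * log (1 - D x)) μ)
    (hintOpt : IntegrableOn
      (fun x => p x * log (p x / (p x + q x)) + q x * log (q x / (p x + q x)))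
      {x | 0 < p x + q x} μ) :
    ∫ x, (p x * log (D x) + q x * log (1 - D x)) ∂μ =
        ∫ x in {x | 0 < p x + q x},
          (p x * log (p x / (p x + q x)) + q x * log (q x / (p x + q x))) ∂μ ↔
      ∀ᵐ x ∂μ.restrict {x | 0 < p x + q x}, D x = p x / (p x + q x) := by
  have support_mem : ∀ᵐ x ∂μ.restrict {x | 0 < p x + q x}, 0 < p x + q x :=
    ae_restrict_mem₀ (nullMeasurableSet_lt aemeasurable_const (hpm.add hqm))
  rw [← setIntegral_add_pos_eq_integral hp hq, integral_eq_iff_of_ae_le hint.integrableOn hintOpt]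
  · apply Filter.eventually_congr
    filter_upwards [support_mem, ae_restrict_of_ae hp, ae_restrict_of_ae hq, hD]
      with x hx hpx hqx hDx
    exact mul_log_add_mul_log_one_sub_eq_iff hpx hqx hDx hx
  · filter_upwards [support_mem, ae_restrict_of_ae hp, ae_restrict_of_ae hq, hD]
      with x hx hpx hqx hDx
    exact mul_log_add_mul_log_one_sub_le hpx hqx hDx hx

end Integral

/-- Equality case for the optimal GAN discriminator: if a discriminator `D : X → (0,1)`
attains the optimal (finite) value of the objective, then `D = p/(p+q)` μ-a.e. on the
set `{p+q > 0}`. -/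
theorem gan_optimal_discriminator_unique
    {X : Type*} [MeasurableSpace X] (μ : Measure X) [SigmaFinite μ]
    (p q : X → ℝ) (hpm : Measurable p) (hqm : Measurable q)
    (hp0 : ∀ x, 0 ≤ p x) (hq0 : ∀ x, 0 ≤ q x)
    (hp1 : ∫ x, p x ∂μ = 1) (hq1 : ∫ x, q x ∂μ = 1)
    (D : X → ℝ) (hDm : Measurable D) (hD : ∀ x, D x ∈ Set.Ioo (0:ℝ) 1)
    (hint : Integrable (fun x => p x * Real.log (D x) + q x * Real.log (1 - D x)) μ)
    (hintOpt : IntegrableOn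
      (fun x => p x * Real.log (p x / (p x + q x)) + q x * Real.log (q x / (p x + q x)))
      {x | 0 < p x + q x} μ)
    (heq : ∫ x, (p x * Real.log (D x) + q x * Real.log (1 - D x)) ∂μ
        = ∫ x in {x | 0 < p x + q x},
            (p x * Real.log (p x / (p x + q x)) + q x * Real.log (q x / (p x + q x))) ∂μ) :
    ∀ᵐ x ∂(μ.restrict {x | 0 < p x + q x}), D x = p x / (p x + q x) := by
  exact (gan_optimal_discriminator_unique_general hpm.aemeasurable hqm.aemeasurable
    (.of_forall hp0) (.of_forall hq0) (.of_forall hD) hint hintOpt).mp heq
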